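/- arXiv:1210.3187 — 2 statements merged into one kernel-verified Lean document; each statement's English description precedes it below -/
import Mathlib

section
/- Let G be a bipartite graph with parts V₁, V₂, |V₁| = |V₂| = n. If G has no isolated vertices and has no perfect matching, then there exists i ∈ {1,2} and a set A ⊆ V_i such that: (i) the neighborhood Γ(A) has exactly |A|−1 elements; (ii) the subgraph induced by A ∪ Γ(A) is connected; (iii) 2 ≤ |A| ≤ (n+1)/2. -/
open Finset

/-- Core argument: a smallest deficient set on side `P` has all the required properties. -/
lemma blocking_core
    {V : Type*} [Fintype V] [DecidableEq V] (G : SimpleGraph V) [DecidableRel G.Adj]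
    (n : ℕ) (P Q : Finset V) (N : Finset V → Finset V)
    (hN : ∀ A v, v ∈ N A ↔ ∃ a ∈ A, G.Adj a v)
    (hdisj : Disjoint P Q)
    (hP : P.card = n) (hQ : Q.card = n)
    (hbip : ∀ u v, G.Adj u v → (u ∈ P ∧ v ∈ Q) ∨ (u ∈ Q ∧ v ∈ P))
    (hnoiso : ∀ v : V, ∃ w, G.Adj v w)
    (A : Finset V) (hA : A ⊆ P) (hdef : (N A).card < A.card)
    (hmin : ∀ B : Finset V, (B ⊆ P ∨ B ⊆ Q) → (N B).card < B.card → A.card ≤ B.card) :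
    (N A).card = A.card - 1 ∧ (G.induce ((A ∪ N A : Finset V) : Set V)).Connected ∧
      2 ≤ A.card ∧ (A.card : ℝ) ≤ ((n : ℝ) + 1) / 2 := by
  have hmono : ∀ B C : Finset V, B ⊆ C → N B ⊆ N C := by
    intro B C h v hv
    rw [hN] at hv ⊢
    obtain ⟨a, ha, h'⟩ := hv
    exact ⟨a, h ha, h'⟩
  have hdPQ : ∀ x, x ∈ P → x ∉ Q := fun x h h' => Finset.disjoint_left.mp hdisj h h'
  obtain ⟨a₀, ha₀⟩ : A.Nonempty := Finset.card_pos.mp (by omega)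
  have hcard : (N A).card = A.card - 1 := by
    by_contra hne
    have h1 := Finset.card_erase_of_mem ha₀
    have h2 := Finset.card_le_card (hmono _ _ (Finset.erase_subset a₀ A))
    have h3 : A.card ≤ (A.erase a₀).card → False := by
      have := Finset.card_pos.mpr ⟨a₀, ha₀⟩
      omega
    exact h3 (hmin _ (Or.inl ((Finset.erase_subset _ _).trans hA)) (by omega))
  have hNA : N A ⊆ Q := by
    intro v hv
    rw [hN] at hv
    obtain ⟨a, ha, h⟩ := hv
    rcases hbip _ _ h with h | h
    · exact h.2
    · exact absurd h.1 (hdPQ _ (hA ha))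
  refine ⟨hcard, ?_, ?_, ?_⟩
  · let H := G.induce ((A ∪ N A : Finset V) : Set V)
    have memA : ∀ a ∈ A, a ∈ ((A ∪ N A : Finset V) : Set V) := fun a ha => by simp [ha]
    have memN : ∀ a ∈ N A, a ∈ ((A ∪ N A : Finset V) : Set V) := fun a ha => by simp [ha]
    let r : V → Prop := fun x =>
      ∃ hx : x ∈ ((A ∪ N A : Finset V) : Set V), H.Reachable ⟨a₀, memA _ ha₀⟩ ⟨x, hx⟩
    have hstep : ∀ x y, r x → y ∈ ((A ∪ N A : Finset V) : Set V) → G.Adj x y → r y := by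
      rintro x y ⟨hx, hr⟩ hy hxy
      refine ⟨hy, hr.trans (SimpleGraph.Adj.reachable ?_)⟩
      exact hxy
    classical
    have hall : ∀ a ∈ A, r a := by
      by_contra! hcon
      obtain ⟨b, hb, hbr⟩ := hcon
      have hsum := Finset.card_filter_add_card_filter_not (s := A) r
      have h0 : 0 < (A.filter r).card :=
        Finset.card_pos.mpr ⟨a₀, by
          rw [Finset.mem_filter]; exact ⟨ha₀, memA _ ha₀, SimpleGraph.Reachable.refl _⟩⟩
      have h1 : 0 < (A.filter (fun x => ¬ r x)).card :=
        Finset.card_pos.mpr ⟨b, by simp [hb, hbr]⟩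
      have hd : Disjoint (N (A.filter r)) (N (A.filter (fun x => ¬ r x))) := by
        rw [Finset.disjoint_left]
        intro w hw hw'
        have hwA : w ∈ N A := hmono _ _ (Finset.filter_subset _ _) hw
        rw [hN] at hw hw'
        obtain ⟨x, hx, hxw⟩ := hw
        obtain ⟨y, hy, hyw⟩ := hw'
        rw [Finset.mem_filter] at hx hy
        exact hy.2 (hstep w y (hstep x w hx.2 (memN _ hwA) hxw) (memA _ hy.1) hyw.symm)
      have h2 := Finset.card_union_of_disjoint hd
      have h3 := Finset.card_le_card (Finset.union_subset
        (hmono _ _ (Finset.filter_subset r A))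
        (hmono _ _ (Finset.filter_subset (fun x => ¬ r x) A)))
      have h4 := hmin _ (Or.inl ((Finset.filter_subset r A).trans hA))
      have h5 := hmin _ (Or.inl ((Finset.filter_subset (fun x => ¬ r x) A).trans hA))
      by_cases h6 : (N (A.filter r)).card < (A.filter r).card
      · have := h4 h6
        omega
      · by_cases h7 : (N (A.filter (fun x => ¬ r x))).card < (A.filter (fun x => ¬ r x)).card
        · have := h5 h7
          omega
        · omega
    rw [SimpleGraph.connected_iff_exists_forall_reachable]
    refine ⟨⟨a₀, memA _ ha₀⟩, ?_⟩
    rintro ⟨x, hx⟩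
    have hx' := hx
    rw [Finset.mem_coe, Finset.mem_union] at hx'
    rcases hx' with h | h
    · exact (hall x h).2
    · obtain ⟨a, ha, hax⟩ := (hN _ _).mp h
      exact (hstep a x (hall a ha) hx hax).2
  · obtain ⟨w, hw⟩ := hnoiso a₀
    have : 0 < (N A).card := Finset.card_pos.mpr ⟨w, (hN _ _).mpr ⟨a₀, ha₀, hw⟩⟩
    omega
  · have h1 := Finset.card_sdiff_add_card_eq_card hNA
    have h2 := Finset.card_sdiff_add_card_eq_card hA
    have h3 : N (Q \ N A) ⊆ P \ A := by
      intro v hv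
      obtain ⟨b, hb, hbv⟩ := (hN _ _).mp hv
      rw [Finset.mem_sdiff] at hb ⊢
      constructor
      · rcases hbip _ _ hbv with h | h
        · exact absurd hb.1 (hdPQ _ h.1)
        · exact h.2
      · intro hvA
        exact hb.2 ((hN _ _).mpr ⟨v, hvA, hbv.symm⟩)
    have h4 := Finset.card_le_card h3
    have h5 := hmin (Q \ N A) (Or.inr Finset.sdiff_subset) (by omega)
    have h6 : 2 * A.card ≤ n + 1 := by omega
    have h7 : (2 : ℝ) * A.card ≤ n + 1 := by exact_mod_cast h6
    linarith

/-- Bollobás, Lemma 7.12: if a bipartite graph with parts of equal size `n`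
has no isolated vertices and no perfect matching, then some side contains a set `A` with
`|Γ(A)| = |A| − 1`, the subgraph induced on `A ∪ Γ(A)` connected, and `2 ≤ |A| ≤ (n+1)/2`. -/
theorem bipartite_no_matching_blocking_set
    {V : Type*} [Fintype V] [DecidableEq V] (G : SimpleGraph V) [DecidableRel G.Adj]
    (n : ℕ) (V₁ V₂ : Finset V)
    (hdisj : Disjoint V₁ V₂) (hcover : V₁ ∪ V₂ = Finset.univ)
    (hcard₁ : V₁.card = n) (hcard₂ : V₂.card = n)
    (hbip : ∀ u v, G.Adj u v → (u ∈ V₁ ∧ v ∈ V₂) ∨ (u ∈ V₂ ∧ v ∈ V₁))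
    (hnoiso : ∀ v : V, ∃ w, G.Adj v w)
    (hnomatch : ¬ ∃ M : G.Subgraph, M.IsPerfectMatching) :
    ∃ A : Finset V, (A ⊆ V₁ ∨ A ⊆ V₂) ∧
      (Finset.univ.filter (fun v => ∃ a ∈ A, G.Adj a v)).card = A.card - 1 ∧
      (G.induce ((A ∪ Finset.univ.filter (fun v => ∃ a ∈ A, G.Adj a v) : Finset V) :
        Set V)).Connected ∧
      2 ≤ A.card ∧ (A.card : ℝ) ≤ ((n : ℝ) + 1) / 2 := by
  classical
  let N : Finset V → Finset V := fun A => Finset.univ.filter (fun v => ∃ a ∈ A, G.Adj a v)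
  have hN : ∀ A v, v ∈ N A ↔ ∃ a ∈ A, G.Adj a v := fun A v => by simp [N]
  have hdPQ : ∀ x, x ∈ V₁ → x ∉ V₂ := fun x h h' => Finset.disjoint_left.mp hdisj h h'
  have hex : ∃ A : Finset V, (A ⊆ V₁ ∨ A ⊆ V₂) ∧ (N A).card < A.card := by
    by_contra! hcon
    apply hnomatch
    have hB : G.IsBipartiteWith (V₁ : Set V) (V₂ : Set V) :=
      ⟨by exact_mod_cast hdisj, fun u v h => by simpa using hbip u v h⟩
    refine SimpleGraph.exists_isPerfectMatching_of_forall_ncard_le hB ?_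
    intro s
    have hs : (⋃ x ∈ s, G.neighborSet x) = (N s.toFinset : Set V) := by
      ext v
      simp [hN]
    rw [hs, Set.ncard_coe_finset, Set.ncard_eq_toFinset_card']
    have h1 := hcon (s.toFinset ∩ V₁) (Or.inl Finset.inter_subset_right)
    have h2 := hcon (s.toFinset ∩ V₂) (Or.inr Finset.inter_subset_right)
    have h3 : s.toFinset = (s.toFinset ∩ V₁) ∪ (s.toFinset ∩ V₂) := by
      rw [← Finset.inter_union_distrib_left, hcover, Finset.inter_univ]
    have h4 := Finset.card_union_le (s.toFinset ∩ V₁) (s.toFinset ∩ V₂)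
    rw [← h3] at h4
    have hd : Disjoint (N (s.toFinset ∩ V₁)) (N (s.toFinset ∩ V₂)) := by
      rw [Finset.disjoint_left]
      intro w hw hw'
      obtain ⟨x, hx, hxw⟩ := (hN _ _).mp hw
      obtain ⟨y, hy, hyw⟩ := (hN _ _).mp hw'
      rw [Finset.mem_inter] at hx hy
      have hw2 : w ∈ V₂ := by
        rcases hbip _ _ hxw with h | h
        · exact h.2
        · exact absurd h.1 (hdPQ _ hx.2)
      rcases hbip _ _ hyw with h | h
      · exact hdPQ _ h.1 hy.2
      · exact hdPQ _ h.2 hw2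
    have h5 := Finset.card_union_of_disjoint hd
    have h6 : N (s.toFinset ∩ V₁) ∪ N (s.toFinset ∩ V₂) ⊆ N s.toFinset := by
      intro w hw
      rw [Finset.mem_union, hN, hN] at hw
      rw [hN]
      rcases hw with ⟨x, hx, h⟩ | ⟨x, hx, h⟩ <;>
        exact ⟨x, (Finset.mem_inter.mp hx).1, h⟩
    have h7 := Finset.card_le_card h6
    omega
  obtain ⟨A, ⟨hA, hdef⟩, hmin⟩ :=
    WellFounded.has_min (measure (fun A : Finset V => A.card)).wf
      {A : Finset V | (A ⊆ V₁ ∨ A ⊆ V₂) ∧ (N A).card < A.card} hex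
  have hmin' : ∀ B : Finset V, (B ⊆ V₁ ∨ B ⊆ V₂) → (N B).card < B.card → A.card ≤ B.card :=
    fun B h1 h2 => not_lt.mp (hmin B ⟨h1, h2⟩)
  refine ⟨A, hA, ?_⟩
  rcases hA with hA | hA
  · exact blocking_core G n V₁ V₂ N hN hdisj hcard₁ hcard₂ hbip hnoiso A hA hdef hmin'
  · exact blocking_core G n V₂ V₁ N hN hdisj.symm hcard₂ hcard₁
      (fun u v h => (hbip u v h).symm) hnoiso A hA hdef (fun B h => hmin' B h.symm)
end

section
/- Let 0 < q < 1/2, 0 < ε < 1/12, and suppose ε·n·q·(1−q) ≥ 12. Let S_{n,q} be a Binomial(n,q) random variable. Then P( |S_{n,q}/(nq) − 1| > ε ) ≤ (1/√(ε² n q)) · e^{−nqε²/3}. -/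
open Finset MeasureTheory ProbabilityTheory Real

/-- The binomial point probability. -/
noncomputable def bpt (n : ℕ) (p : ℝ) (k : ℕ) : ℝ := (n.choose k : ℝ) * p ^ k * (1 - p) ^ (n - k)

lemma bpt_nonneg (n : ℕ) {p : ℝ} (h0 : 0 ≤ p) (h1 : p ≤ 1) (k : ℕ) : 0 ≤ bpt n p k := by
  have : 0 ≤ 1 - p := by linarith
  unfold bpt; positivity

open Classical in
lemma meas_le {Ω : Type*} [MeasurableSpace Ω] (μ : Measure Ω) [IsProbabilityMeasure μ]
    (n : ℕ) (q : ℝ) (hq0 : 0 < q) (hq : q < 1)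
    (E : Fin n → Set Ω)
    (hEmeas : ∀ i, MeasurableSet (E i))
    (hindep : iIndepSet E μ)
    (hprob : ∀ i, μ (E i) = ENNReal.ofReal q) (P : ℕ → Prop) (s : Set Ω)
    (hs : ∀ ω ∈ s, P (#{i | ω ∈ E i})) :
    μ s ≤ ENNReal.ofReal (∑ k ∈ range (n + 1), if P k then bpt n q k else 0) := by
  have hsub : s ⊆ ⋃ A ∈ (univ : Finset (Finset (Fin n))).filter (fun A => P #A),
      ⋂ i, (if i ∈ A then E i else (E i)ᶜ) := by
    intro ω hω
    simp only [Set.mem_iUnion, Set.mem_iInter]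
    refine ⟨({i | ω ∈ E i} : Finset (Fin n)), by simpa using hs ω hω, fun i => ?_⟩
    by_cases h : ω ∈ E i <;> simp [h]
  have hatom : ∀ A : Finset (Fin n), μ (⋂ i, (if i ∈ A then E i else (E i)ᶜ)) =
      ENNReal.ofReal (q ^ #A * (1 - q) ^ (n - #A)) := by
    intro A
    have h1q : 0 ≤ 1 - q := by linarith
    have hg : ∀ i, MeasurableSet[MeasurableSpace.generateFrom {E i}] (E i) := fun i =>
      MeasurableSpace.measurableSet_generateFrom rfl
    rw [((iIndepSet_iff_iIndep _ _).1 hindep).meas_iInter]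
    · have : ∀ i, μ (if i ∈ A then E i else (E i)ᶜ) = ENNReal.ofReal (if i ∈ A then q else 1 - q) := by
        intro i
        split_ifs
        · exact hprob i
        · rw [prob_compl_eq_one_sub (hEmeas i), hprob, ENNReal.ofReal_sub _ hq0.le, ENNReal.ofReal_one]
      simp_rw [this]
      rw [← ENNReal.ofReal_prod_of_nonneg]
      · congr 1
        rw [Finset.prod_ite, prod_const, prod_const]
        congr 2
        · simp
        · rw [filter_not, ← compl_eq_univ_sdiff, card_compl]; simp
      · intro i _; split_ifs <;> linarith
    · intro i
      split_ifs
      · exact hg i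
      · exact (hg i).compl
  calc μ s ≤ _ := measure_mono hsub
    _ ≤ _ := measure_biUnion_finset_le _ _
    _ = ENNReal.ofReal (∑ A ∈ (univ : Finset (Finset (Fin n))).filter (fun A => P #A),
          q ^ #A * (1 - q) ^ (n - #A)) := by
        rw [ENNReal.ofReal_sum_of_nonneg]
        · exact sum_congr rfl fun A _ => hatom A
        · intro A _
          have h1q : 0 ≤ 1 - q := by linarith
          positivity
    _ = _ := by
        congr 1
        rw [sum_filter]
        have := Finset.sum_powerset_apply_card (x := (univ : Finset (Fin n)))
          (fun k => if P k then q ^ k * (1 - q) ^ (n - k) else 0)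
        simp only [powerset_univ, card_univ, Fintype.card_fin] at this
        rw [this]
        refine sum_congr rfl fun k _ => ?_
        split_ifs <;> simp [bpt, mul_assoc]

lemma tail_le (n : ℕ) (p d : ℝ) (h0 : 0 < p) (h1 : p < 1) (hd : 0 < d) (K : ℕ)
    (hK : n * p + d ≤ K) (hKn : K ≤ n) :
    ∑ k ∈ Ico K (n + 1), bpt n p k ≤ (n * p + d) * (1 - p) / d * bpt n p K := by
  have h1p : 0 < 1 - p := by linarith
  have hend : bpt n p (n + 1) = 0 := by simp [bpt]
  have key : ∀ k ∈ Ico K (n + 1),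
      bpt n p k ≤ (n * p + d) * (1 - p) / d * (bpt n p k - bpt n p (k + 1)) := by
    intro k hk
    rw [Finset.mem_Ico] at hk
    have hkK : (K : ℝ) ≤ k := by exact_mod_cast hk.1
    have hb0 := bpt_nonneg n h0.le h1.le k
    have hb1 := bpt_nonneg n h0.le h1.le (k + 1)
    have hrec : (k + 1 : ℝ) * (1 - p) * bpt n p (k + 1) = (n - k) * p * bpt n p k := by
      rcases Nat.lt_or_ge k n with hkn | hkn
      · have hc : (n.choose (k + 1) : ℝ) * (k + 1) = n.choose k * ((n : ℝ) - k) := by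
          have := Nat.choose_succ_right_eq n k
          rw [← Nat.cast_sub hkn.le]; exact_mod_cast this
        have he : n - k = (n - (k + 1)) + 1 := by omega
        unfold bpt
        rw [he, pow_succ, pow_succ]
        linear_combination (p ^ k * p * (1 - p) ^ (n - (k + 1)) * (1 - p)) * hc
      · have : k = n := by omega
        subst this
        rw [hend]; ring
    rw [div_mul_eq_mul_div, le_div_iff₀ hd]
    have e1 : (n * p + d) * ((1 - p) * bpt n p (k + 1)) ≤ (k + 1) * ((1 - p) * bpt n p (k + 1)) :=
      mul_le_mul_of_nonneg_right (by linarith) (by positivity)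
    have e2 : (n - k) * (p * bpt n p k) ≤ (n - (n * p + d)) * (p * bpt n p k) :=
      mul_le_mul_of_nonneg_right (by linarith) (by positivity)
    linarith
  refine (sum_le_sum key).trans ?_
  rw [← mul_sum]
  have ht : ∑ k ∈ Ico K (n + 1), (bpt n p k - bpt n p (k + 1)) = bpt n p K - bpt n p (n + 1) := by
    have := Finset.sum_Ico_sub (fun k => bpt n p k) (show K ≤ n + 1 by omega)
    rw [← neg_inj, neg_sub, ← this, ← sum_neg_distrib]
    simp
  rw [ht, hend, sub_zero]

lemma fact_le (n : ℕ) (hn : 0 < n) : (n.factorial : ℝ) ≤ exp 1 * √n * (n / exp 1) ^ n := by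
  obtain ⟨m, rfl⟩ : ∃ m, n = m + 1 := ⟨n - 1, by omega⟩
  have h := Stirling.stirlingSeq'_antitone (Nat.zero_le m)
  simp only [Function.comp, Nat.succ_eq_add_one, zero_add, Stirling.stirlingSeq_one] at h
  rw [Stirling.stirlingSeq, div_le_iff₀ (by positivity)] at h
  refine h.trans (le_of_eq ?_)
  rw [Real.sqrt_mul (by norm_num)]
  field_simp

lemma choose_le (n K : ℕ) (h0 : 0 < K) (h1 : K < n) (p : ℝ) (hp : 0 < p) (hp1 : p < 1) :
    bpt n p K ≤ exp 1 / (2 * π) * √(n / (K * (n - K))) *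
      ((n * p / K) ^ K * (n * (1 - p) / (n - K)) ^ (n - K)) := by
  have h1p : 0 < 1 - p := by linarith
  obtain ⟨M, rfl⟩ : ∃ M, n = K + M := ⟨n - K, by omega⟩
  have hM : 0 < M := by omega
  have hKr : (0 : ℝ) < K := by exact_mod_cast h0
  have hMr : (0 : ℝ) < M := by exact_mod_cast hM
  have a := fact_le (K + M) (by omega)
  have b := Stirling.le_factorial_stirling K
  have c := Stirling.le_factorial_stirling M
  rw [Real.sqrt_mul (by positivity)] at b c
  have hs : √(2 * π) * √(2 * π) = 2 * π := Real.mul_self_sqrt (by positivity)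
  have hch : ((K + M).choose K : ℝ) = (K + M).factorial / (K.factorial * M.factorial) := by
    rw [Nat.cast_add_choose]
  have hspos : 0 < √(2 * π) := by positivity
  generalize √(2 * π) = r at b c hs hspos
  unfold bpt
  rw [hch, Nat.add_sub_cancel_left]
  have hle : ((K + M).factorial : ℝ) / (K.factorial * M.factorial) ≤
      (exp 1 * √(K + M : ℕ) * ((K + M : ℕ) / exp 1) ^ (K + M)) /
      ((r * √K * (K / exp 1) ^ K) * (r * √M * (M / exp 1) ^ M)) := by
    gcongr
  have h3 := mul_le_mul_of_nonneg_right hle (show 0 ≤ p ^ K * (1 - p) ^ M by positivity)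
  rw [mul_assoc]
  refine h3.trans (le_of_eq ?_)
  push_cast
  rw [add_sub_cancel_left, Real.sqrt_div (by positivity), Real.sqrt_mul (by positivity)]
  simp only [div_pow, mul_pow, pow_add]
  have hsK : √(K : ℝ) ≠ 0 := by positivity
  have hsM : √(M : ℝ) ≠ 0 := by positivity
  rw [← hs]
  field_simp

lemma log_bd (δ : ℝ) (h : -(1 / 3) ≤ δ) (h' : δ ≤ 1) : δ + δ ^ 2 / 3 ≤ (1 + δ) * log (1 + δ) := by
  rcases le_or_gt 0 δ with hd | hd
  · have := Real.le_log_one_add_of_nonneg hd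
    refine le_trans ?_ (mul_le_mul_of_nonneg_left this (by linarith))
    rw [← mul_div_assoc, le_div_iff₀ (by linarith)]
    nlinarith [mul_nonneg (mul_nonneg hd hd) (sub_nonneg.2 h')]
  · have h2 := Real.abs_log_sub_add_sum_range_le (x := -δ) (by rw [abs_of_pos] <;> linarith) 2
    rw [abs_of_pos (show 0 < -δ by linarith), abs_le] at h2
    have h3 := h2.1
    simp only [Finset.sum_range_succ, Finset.sum_range_zero, sub_neg_eq_add] at h3
    norm_num at h3
    have h4 := mul_le_mul_of_nonneg_left h3 (show 0 ≤ 1 + δ by linarith)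
    have h5 : (1 + δ) * -((-δ) ^ 3 / (1 + δ)) = δ ^ 3 := by
      have : 1 + δ ≠ 0 := by linarith
      field_simp
      try ring
    have : 0 ≤ δ ^ 2 * (1 / 3 + δ) := mul_nonneg (sq_nonneg _) (by linarith)
    nlinarith

/-- point bound, with `δ` the relative deviation of `K` from the mean -/
lemma pow_bd (n K : ℕ) (h0 : 0 < K) (h1 : K < n) (p δ : ℝ) (hp : 0 < p) (hp1 : p < 1)
    (hK : (K : ℝ) = n * p * (1 + δ)) (h : -(1 / 3) ≤ δ) (h' : δ ≤ 1) :
    (n * p / K) ^ K * (n * (1 - p) / (n - K)) ^ (n - K) ≤ exp (-(n * p * δ ^ 2) / 3) := by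
  have h1p : 0 < 1 - p := by linarith
  have hKr : (0 : ℝ) < K := by exact_mod_cast h0
  have hnK : (0 : ℝ) < n - K := by rw [sub_pos]; exact_mod_cast h1
  have hn : (0 : ℝ) < n := by linarith
  have e1 : (n * p / K) ^ K = exp (-(K * log (1 + δ))) := by
    have : n * p / K = (1 + δ)⁻¹ := by
      have : 0 < 1 + δ := by linarith
      rw [hK]; field_simp
    rw [this, ← Real.exp_log (show 0 < (1 + δ)⁻¹ by apply inv_pos.2; linarith), ← Real.exp_nat_mul, Real.log_inv]
    ring_nf
  have e2 : (n * (1 - p) / (n - K)) ^ (n - K) ≤ exp (K - n * p) := by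
    have hh : n * (1 - p) / (n - K) ≤ exp (n * (1 - p) / (n - K) - 1) := by
      have := Real.add_one_le_exp (n * (1 - p) / ((n : ℝ) - K) - 1)
      linarith
    refine (pow_le_pow_left₀ (by positivity) hh _).trans (le_of_eq ?_)
    rw [← Real.exp_nat_mul, Nat.cast_sub h1.le]
    congr 1
    field_simp
    ring
  calc _ ≤ exp (-(K * log (1 + δ))) * exp (K - n * p) := by
        rw [e1]; gcongr
    _ = exp (-(K * log (1 + δ)) + (K - n * p)) := (Real.exp_add _ _).symm
    _ ≤ _ := by
      apply Real.exp_le_exp.2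
      have := mul_le_mul_of_nonneg_left (log_bd δ h h') (show 0 ≤ n * p by positivity)
      rw [hK]; linarith

lemma const_bd (X G Y : ℝ) (hX : 0 ≤ X) (hG : 0 ≤ G) (hY : 0 < Y) (h : X * G ^ 2 * Y ≤ 1.2) :
    G * (exp 1 / (2 * π) * √X) ≤ 1 / √Y / 2 := by
  have h1 : √X * G * √Y ≤ 1.1 := by
    have : √X * G * √Y = √(X * G ^ 2 * Y) := by
      rw [Real.sqrt_mul (by positivity), Real.sqrt_mul hX, Real.sqrt_sq hG]
    rw [this]
    apply Real.sqrt_le_iff.2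
    constructor
    · norm_num
    · norm_num at h ⊢; linarith
  have hY' : 0 < √Y := by positivity
  have he := Real.exp_one_lt_d9
  have hpi := Real.pi_gt_d2
  rw [div_div, le_div_iff₀ (by positivity)]
  have : G * (exp 1 / (2 * π) * √X) * (√Y * 2) = exp 1 * (√X * G * √Y) / π := by
    field_simp
  rw [this, div_le_one (by positivity)]
  calc exp 1 * (√X * G * √Y) ≤ 2.7182818286 * 1.1 := by gcongr
    _ ≤ π := by norm_num at hpi ⊢; linarith

lemma upper_tail (n : ℕ) (q ε : ℝ)
    (hq0 : 0 < q) (hq : q < 1 / 2) (hε0 : 0 < ε) (hε : ε < 1 / 12)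
    (hm : 144 ≤ n * q) (K : ℕ) (hK : n * q * (1 + ε) ≤ K) (hK' : (K : ℝ) ≤ n * q * (1 + ε) + 1) :
    ∑ k ∈ Ico K (n + 1), bpt n q k ≤
      (1 / √(ε ^ 2 * n * q)) / 2 * exp (-(n * q * ε ^ 2) / 3) := by
  have hn : (0 : ℝ) < n := by
    by_contra hcon
    have : (n : ℝ) * q ≤ 0 := mul_nonpos_of_nonpos_of_nonneg (by linarith) hq0.le
    linarith
  obtain ⟨δ, hδ⟩ : ∃ δ : ℝ, (K : ℝ) = n * q * (1 + δ) :=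
    ⟨K / (n * q) - 1, by field_simp; ring⟩
  have hm0 : 0 < n * q := by positivity
  have hδ1 : ε ≤ δ := by
    rw [hδ] at hK
    have := le_of_mul_le_mul_left hK hm0
    linarith
  have hδ2 : δ ≤ 13 / 144 := by
    by_contra hcon
    have : n * q * (13 / 144) < n * q * δ := mul_lt_mul_of_pos_left (not_le.1 hcon) hm0
    have : n * q * ε ≤ n * q * (1 / 12) := mul_le_mul_of_nonneg_left hε.le hm0.le
    nlinarith
  have hnK : n * (1 - q) * (131 / 144) ≤ n - K := by
    rw [hδ]
    have : n * q * δ ≤ n * (1 - q) * (13 / 144) := by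
      have : q * δ ≤ (1 - q) * (13 / 144) := by nlinarith
      nlinarith
    linarith
  have h1q : 0 < 1 - q := by linarith
  have hnK0 : (0 : ℝ) < n - K := lt_of_lt_of_le (by positivity) hnK
  have hKn : K < n := by
    have : (K : ℝ) < n := by linarith
    exact_mod_cast this
  have hK0r : (0 : ℝ) < K := lt_of_lt_of_le (by positivity) hK
  have hK0 : 0 < K := by exact_mod_cast hK0r
  have t := tail_le n q (n * q * ε) hq0 (by linarith) (by positivity) K (by linarith) hKn.le
  have c := choose_le n K hK0 hKn q hq0 (by linarith)
  have p := pow_bd n K hK0 hKn q δ hq0 (by linarith) hδ (by linarith) (by linarith)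
  have p2 : exp (-(n * q * δ ^ 2) / 3) ≤ exp (-(n * q * ε ^ 2) / 3) := by
    apply Real.exp_le_exp.2
    have : n * q * ε ^ 2 ≤ n * q * δ ^ 2 := by gcongr
    linarith
  have hG : (n * q + n * q * ε) * (1 - q) / (n * q * ε) = (1 + ε) * (1 - q) / ε := by
    field_simp
  rw [hG] at t
  have cb := const_bd (n / (K * (n - K))) ((1 + ε) * (1 - q) / ε) (ε ^ 2 * n * q)
    (by positivity) (by positivity) (by positivity) (by
      have : (n : ℝ) / (K * (n - K)) ≤ n / ((n * q * (1 + ε)) * (n * (1 - q) * (131 / 144))) := by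
        gcongr
      calc _ ≤ n / ((n * q * (1 + ε)) * (n * (1 - q) * (131 / 144))) *
              ((1 + ε) * (1 - q) / ε) ^ 2 * (ε ^ 2 * n * q) := by gcongr
        _ = (1 + ε) * (1 - q) * (144 / 131) := by field_simp
        _ ≤ (1 + 1 / 12) * 1 * (144 / 131) := by gcongr; linarith
        _ ≤ 1.2 := by norm_num)
  calc _ ≤ _ := t
    _ ≤ (1 + ε) * (1 - q) / ε * (exp 1 / (2 * π) * √(n / (K * (n - K))) *
          exp (-(n * q * ε ^ 2) / 3)) := by
        gcongr
        refine c.trans ?_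
        gcongr
        exact p.trans p2
    _ = (1 + ε) * (1 - q) / ε * (exp 1 / (2 * π) * √(n / (K * (n - K)))) *
          exp (-(n * q * ε ^ 2) / 3) := by ring
    _ ≤ _ := by gcongr

lemma lower_tail (n : ℕ) (q ε : ℝ)
    (hq0 : 0 < q) (hq : q < 1 / 2) (hε0 : 0 < ε) (hε : ε < 1 / 12)
    (hm : 144 ≤ n * q) (K : ℕ) (hK : K ≤ n * q * (1 - ε)) (hK' : n * q * (1 - ε) - 1 ≤ K) :
    ∑ k ∈ range (K + 1), bpt n q k ≤
      (1 / √(ε ^ 2 * n * q)) / 2 * exp (-(n * q * ε ^ 2) / 3) := by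
  have hn : (0 : ℝ) < n := by
    by_contra hcon
    have : (n : ℝ) * q ≤ 0 := mul_nonpos_of_nonpos_of_nonneg (by linarith) hq0.le
    linarith
  obtain ⟨δ, hδ⟩ : ∃ δ : ℝ, (K : ℝ) = n * q * (1 + -δ) :=
    ⟨1 - K / (n * q), by field_simp; ring⟩
  have hm0 : 0 < n * q := by positivity
  have hδ1 : ε ≤ δ := by
    rw [hδ] at hK
    have := le_of_mul_le_mul_left hK hm0
    linarith
  have hδ2 : δ ≤ 13 / 144 := by
    by_contra hcon
    have : n * q * (13 / 144) < n * q * δ := mul_lt_mul_of_pos_left (not_le.1 hcon) hm0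
    have : n * q * ε ≤ n * q * (1 / 12) := mul_le_mul_of_nonneg_left hε.le hm0.le
    nlinarith
  have h1q : 0 < 1 - q := by linarith
  have hKl : n * q * (131 / 144) ≤ K := by
    rw [hδ]
    exact mul_le_mul_of_nonneg_left (by linarith) hm0.le
  have hnK : n * (1 - q + ε * q) ≤ n - K := by linarith
  have hnK0 : (0 : ℝ) < n - K := lt_of_lt_of_le (by positivity) hnK
  have hKn : K < n := by
    have : (K : ℝ) < n := by linarith
    exact_mod_cast this
  have hK0r : (0 : ℝ) < K := lt_of_lt_of_le (by positivity) hKl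
  have hK0 : 0 < K := by exact_mod_cast hK0r
  have hrefl : ∀ j, j ≤ n → bpt n (1 - q) (n - j) = bpt n q j := by
    intro j hj
    unfold bpt
    rw [Nat.choose_symm hj, Nat.sub_sub_self hj]
    ring
  have t := tail_le n (1 - q) (n * q * ε) h1q (by linarith) (by positivity) (n - K)
    (by rw [Nat.cast_sub hKn.le]; linarith) (Nat.sub_le _ _)
  rw [hrefl K hKn.le] at t
  have hsum : ∑ k ∈ range (K + 1), bpt n q k = ∑ k ∈ Ico (n - K) (n + 1), bpt n (1 - q) k := by
    have := Finset.sum_Ico_reflect (bpt n (1 - q)) 0 (show K + 1 ≤ n + 1 by omega)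
    rw [show n + 1 - (K + 1) = n - K by omega, Nat.sub_zero] at this
    rw [← this, Finset.range_eq_Ico]
    refine sum_congr rfl fun j hj => (hrefl j ?_).symm
    rw [Finset.mem_Ico] at hj
    omega
  have c := choose_le n K hK0 hKn q hq0 (by linarith)
  have p := pow_bd n K hK0 hKn q (-δ) hq0 (by linarith) hδ (by linarith) (by linarith)
  rw [neg_sq] at p
  have p2 : exp (-(n * q * δ ^ 2) / 3) ≤ exp (-(n * q * ε ^ 2) / 3) := by
    apply Real.exp_le_exp.2
    have : n * q * ε ^ 2 ≤ n * q * δ ^ 2 := by gcongr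
    linarith
  have hG : (n * (1 - q) + n * q * ε) * (1 - (1 - q)) / (n * q * ε) = (1 - q + ε * q) / ε := by
    field_simp
    ring
  rw [hG] at t
  have cb := const_bd (n / (K * (n - K))) ((1 - q + ε * q) / ε) (ε ^ 2 * n * q)
    (by positivity) (by positivity) (by positivity) (by
      have : (n : ℝ) / (K * (n - K)) ≤ n / ((n * q * (131 / 144)) * (n * (1 - q + ε * q))) := by
        gcongr
      calc _ ≤ n / ((n * q * (131 / 144)) * (n * (1 - q + ε * q))) *
              ((1 - q + ε * q) / ε) ^ 2 * (ε ^ 2 * n * q) := by gcongr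
        _ = (1 - q + ε * q) * (144 / 131) := by
          have : 1 - q + ε * q ≠ 0 := by positivity
          field_simp
        _ ≤ 1 * (144 / 131) := by gcongr; nlinarith
        _ ≤ 1.2 := by norm_num)
  rw [hsum]
  calc _ ≤ _ := t
    _ ≤ (1 - q + ε * q) / ε * (exp 1 / (2 * π) * √(n / (K * (n - K))) *
          exp (-(n * q * ε ^ 2) / 3)) := by
        gcongr
        refine c.trans ?_
        gcongr
        exact p.trans p2
    _ = (1 - q + ε * q) / ε * (exp 1 / (2 * π) * √(n / (K * (n - K)))) *
          exp (-(n * q * ε ^ 2) / 3) := by ring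
    _ ≤ _ := by gcongr

/-- Bollobás, Theorem 1.7(i): for `0 < q < 1/2`, `0 < ε < 1/12` and
`ε n q (1−q) ≥ 12`, if `S` is a sum of `n` independent Bernoulli(`q`) indicators, then
`P(|S/(nq) − 1| > ε) ≤ (1/√(ε² n q)) e^{−nqε²/3}`. -/
theorem binomial_concentration
    {Ω : Type*} [MeasurableSpace Ω] (μ : Measure Ω) [IsProbabilityMeasure μ]
    (n : ℕ) (q ε : ℝ)
    (hq0 : 0 < q) (hq : q < 1 / 2) (hε0 : 0 < ε) (hε : ε < 1 / 12)
    (hlarge : 12 ≤ ε * n * q * (1 - q))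
    (E : Fin n → Set Ω)
    (hEmeas : ∀ i, MeasurableSet (E i))
    (hindep : iIndepSet E μ)
    (hprob : ∀ i, μ (E i) = ENNReal.ofReal q) :
    μ {ω | |(∑ i : Fin n, Set.indicator (E i) (fun _ => (1 : ℝ)) ω) / ((n : ℝ) * q) - 1| > ε}
      ≤ ENNReal.ofReal ((1 / Real.sqrt (ε ^ 2 * n * q)) * Real.exp (-(n * q * ε ^ 2) / 3)) := by
  classical
  have h1q : 0 < 1 - q := by linarith
  have hn0 : (0 : ℝ) ≤ n := Nat.cast_nonneg n
  have hm0 : 0 ≤ n * q := by positivity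
  have hm : 144 ≤ n * q := by
    have h1 : ε * n * q * (1 - q) ≤ ε * n * q * 1 := by gcongr; linarith
    have h2 : ε * (n * q) ≤ 1 / 12 * (n * q) := by gcongr
    linarith
  set m : ℝ := n * q with hmdef
  have hU := upper_tail n q ε hq0 hq hε0 hε hm ⌈m * (1 + ε)⌉₊ (Nat.le_ceil _)
    (Nat.ceil_lt_add_one (by positivity)).le
  have hL := lower_tail n q ε hq0 hq hε0 hε hm ⌊m * (1 - ε)⌋₊
    (Nat.floor_le (mul_nonneg hm0 (by linarith))) (by
      have := Nat.lt_floor_add_one (m * (1 - ε)); linarith)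
  refine (meas_le μ n q hq0 (by linarith) E hEmeas hindep hprob
    (fun k => ⌈m * (1 + ε)⌉₊ ≤ k ∨ k ≤ ⌊m * (1 - ε)⌋₊) _ ?_).trans ?_
  · intro ω hω
    have hsum : (∑ i : Fin n, Set.indicator (E i) (fun _ => (1 : ℝ)) ω) =
        (#{i | ω ∈ E i} : ℕ) := by
      simp [Set.indicator_apply]
    simp only [Set.mem_ofPred_eq, hsum] at hω
    have hmp : 0 < m := by linarith
    rcases lt_abs.1 hω with h | h
    · left
      apply Nat.ceil_le.2
      have : 1 + ε < (#{i | ω ∈ E i} : ℕ) / m := by linarith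
      rw [lt_div_iff₀ hmp] at this
      linarith
    · right
      apply Nat.le_floor
      have : (#{i | ω ∈ E i} : ℕ) / m < 1 - ε := by linarith
      rw [div_lt_iff₀ hmp] at this
      linarith
  · apply ENNReal.ofReal_le_ofReal
    have hb := fun k => bpt_nonneg n hq0.le (show q ≤ 1 by linarith) k
    calc _ = ∑ k ∈ (range (n + 1)).filter
            (fun k => ⌈m * (1 + ε)⌉₊ ≤ k ∨ k ≤ ⌊m * (1 - ε)⌋₊), bpt n q k := by
          rw [sum_filter]
          exact sum_congr rfl fun k _ => by congr
      _ ≤ ∑ k ∈ Ico ⌈m * (1 + ε)⌉₊ (n + 1) ∪ range (⌊m * (1 - ε)⌋₊ + 1), bpt n q k := by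
          apply sum_le_sum_of_subset_of_nonneg
          · intro k hk
            simp only [Finset.mem_filter, Finset.mem_range, Finset.mem_union, Finset.mem_Ico] at hk ⊢
            omega
          · intro k _ _; exact hb k
      _ ≤ ∑ k ∈ Ico ⌈m * (1 + ε)⌉₊ (n + 1), bpt n q k
            + ∑ k ∈ range (⌊m * (1 - ε)⌋₊ + 1), bpt n q k := by
          rw [← sum_union_inter]
          exact le_add_of_nonneg_right (sum_nonneg fun k _ => hb k)
      _ ≤ _ := by linarith
end
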